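/- Let α ∈ (0,2) and β > 0 with αβ = 1, and define S_{α,β}(ω) = −(1/π) Im ∫₀^∞ e^{−ωu} (1 + e^{iπα/2} u^α)^{−β} du for ω > 0 (principal branch). Then lim_{ω→0⁺} [ S_{α,β}(ω) − (1/π) ln(1/ω) ] = −(1/π) ( β(ψ(β) + γ) + γ ), where ψ(β) = Γ′(β)/Γ(β) is the digamma function and γ is the Euler–Mascheroni constant. (Logarithmic divergence of the spectral density of the one-dimensional GFGCC at the origin in the boundary long-range-dependence case.) -/

import Mathlib

open Filter

/-- Spectral density of the one-dimensional GFGCC (Laplace-type representation),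
`S_{α,β}(ω) = −(1/π) Im ∫₀^∞ e^{−ωu}(1 + e^{iπα/2}u^α)^{−β} du` (principal branch). -/
noncomputable def gfgccSpectralDensity (α β ω : ℝ) : ℝ :=
  -(1 / Real.pi) * (∫ u in Set.Ioi (0 : ℝ),
      Complex.exp (-(ω * u : ℝ)) *
        (1 + Complex.exp ((Real.pi : ℂ) * (α : ℂ) / 2 * Complex.I) * (u : ℂ) ^ (α : ℂ))
          ^ (-(β : ℂ))).im

/-! With `c = exp(iπα/2)` one has `c ^ (1/α) = i`, so
`S(ω) = (1/π) Re ∫₀^∞ e^{-ωu} f(u) du`, where `f(u) = c ^ (1/α) (1 + c u ^ α) ^ (-1/α)` satisfies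
`f(u) = 1/u + O(u ^ (-1-α))` at infinity. Comparing `f` with `(1 - e^{-u}) / u`, whose Laplace
transform is `log ((1 + ω) / ω)`, shows that `∫ e^{-ωu} f(u) du - log (1/ω)` converges to the
integral of the difference of the two functions. That integral is also the limit at `s = 1` of the
difference of their Mellin transforms: the one of the reference function is `Γ(s) / (1 - s)`, the
one of `f` is a Beta function, and expanding both at the pole produces `ψ(1/α)` and `γ`. The only
other contribution, `log c / α`, is purely imaginary and is lost on taking real parts.
-/

section

open Complex MeasureTheory Set Asymptotics
open scoped Topology

/-! ### Gamma integrals with a complex rate -/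

theorem integrableOn_cpow_mul_exp_neg_mul {a r : ℂ} (ha : 0 < a.re) (hr : 0 < r.re) :
    IntegrableOn (fun t : ℝ => (t : ℂ) ^ (a - 1) * exp (-(r * t))) (Ioi 0) := by
  have hreal : IntegrableOn (fun t : ℝ => t ^ (a.re - 1) * Real.exp (-r.re * t ^ (1 : ℝ)))
      (Ioi 0) :=
    integrableOn_rpow_mul_exp_neg_mul_rpow (by linarith) one_pos hr
  refine Integrable.mono' hreal ?_ ?_
  · refine ContinuousOn.aestronglyMeasurable (fun t (ht : 0 < t) => ?_) measurableSet_Ioi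
    have : ContinuousAt (fun t : ℝ => (t : ℂ) ^ (a - 1)) t :=
      continuousAt_ofReal_cpow_const _ _ (Or.inr ht.ne')
    exact (this.mul (by fun_prop)).continuousWithinAt
  · filter_upwards [ae_restrict_mem measurableSet_Ioi] with t (ht : 0 < t)
    simp [norm_cpow_eq_rpow_re_of_pos ht, norm_exp]

theorem integral_norm_cpow_mul_exp_neg_mul {a r : ℂ} (ha : 0 < a.re) (hr : 0 < r.re) :
    ∫ t : ℝ in Ioi 0, ‖(t : ℂ) ^ (a - 1) * exp (-(r * t))‖ =
      r.re ^ (-a.re) * Real.Gamma a.re := by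
  rw [Real.rpow_neg hr.le, ← Real.inv_rpow hr.le, ← one_div,
    ← Real.integral_rpow_mul_exp_neg_mul_Ioi ha hr]
  refine setIntegral_congr_fun measurableSet_Ioi fun t (ht : 0 < t) => ?_
  simp [norm_cpow_eq_rpow_re_of_pos ht, norm_exp]

theorem exp_neg_mul_mul_le_inv_mul_exp_neg_mul {σ ρ t : ℝ} (hσ : 0 < σ) (ht : 0 ≤ t)
    (hρ : 2 * σ ≤ ρ) : Real.exp (-(ρ * t)) * t ≤ σ⁻¹ * Real.exp (-(σ * t)) := by
  have hsq : Real.exp (-(ρ * t)) ≤ Real.exp (-(σ * t)) * Real.exp (-(σ * t)) := by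
    rw [← Real.exp_add]
    gcongr
    nlinarith
  have hlinear : Real.exp (-(σ * t)) * (σ * t) ≤ 1 := by
    rw [Real.exp_neg, inv_mul_le_one₀ (Real.exp_pos _)]
    linarith [Real.add_one_le_exp (σ * t)]
  calc Real.exp (-(ρ * t)) * t
      ≤ Real.exp (-(σ * t)) * Real.exp (-(σ * t)) * t := by gcongr
    _ = σ⁻¹ * Real.exp (-(σ * t)) * (Real.exp (-(σ * t)) * (σ * t)) := by field_simp
    _ ≤ σ⁻¹ * Real.exp (-(σ * t)) := mul_le_of_le_one_right (by positivity) hlinear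

theorem differentiableOn_integral_mul_exp_neg_mul {f : ℝ → ℂ}
    (hf : ∀ σ : ℝ, 0 < σ → IntegrableOn (fun t : ℝ => f t * exp (-(σ * t))) (Ioi 0)) :
    DifferentiableOn ℂ (fun r : ℂ => ∫ t : ℝ in Ioi 0, f t * exp (-(r * t))) {r | 0 < r.re} := by
  have hmeas (r : ℂ) :
      AEStronglyMeasurable (fun t : ℝ => f t * exp (-(r * t))) (volume.restrict (Ioi 0)) := by
    have h : AEStronglyMeasurable (fun t : ℝ => exp ((1 - r) * t)) (volume.restrict (Ioi 0)) :=
      (by fun_prop : Continuous fun t : ℝ => exp ((1 - r) * t)).aestronglyMeasurable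
    refine ((hf 1 one_pos).aestronglyMeasurable.mul h).congr (.of_forall fun t => ?_)
    simp only [Pi.mul_apply, ofReal_one, mul_assoc, ← Complex.exp_add]
    ring_nf
  intro r₀ (hr₀ : 0 < r₀.re)
  obtain ⟨σ, hσ, hσr⟩ : ∃ σ : ℝ, 0 < σ ∧ 2 * σ < r₀.re := ⟨r₀.re / 4, by linarith, by linarith⟩
  refine (hasDerivAt_integral_of_dominated_loc_of_deriv_le (s := {r | 2 * σ < r.re})
    (F' := fun r t => f t * (exp (-(r * t)) * -t))
    (bound := fun t => σ⁻¹ * ‖f t * exp (-(σ * t))‖)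
    ((isOpen_lt continuous_const continuous_re).mem_nhds hσr) (.of_forall hmeas) ?_ ?_ ?_
    ((hf σ hσ).norm.const_mul _) ?_).2.differentiableAt.differentiableWithinAt
  · refine Integrable.mono (hf σ hσ) (hmeas r₀) ?_
    filter_upwards [ae_restrict_mem measurableSet_Ioi] with t (ht : 0 < t)
    simp only [norm_mul, norm_exp, neg_re, mul_re, ofReal_re, ofReal_im, mul_zero, sub_zero]
    gcongr
    linarith
  · simp_rw [← mul_assoc]
    exact (hmeas r₀).mul (by fun_prop : Continuous fun t : ℝ => (-t : ℂ)).aestronglyMeasurable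
  · filter_upwards [ae_restrict_mem measurableSet_Ioi] with t (ht : 0 < t) r (hr : 2 * σ < r.re)
    have hexp := exp_neg_mul_mul_le_inv_mul_exp_neg_mul hσ ht.le hr.le
    calc ‖f t * (exp (-(r * t)) * -t)‖ = ‖f t‖ * (Real.exp (-(r.re * t)) * t) := by
          simp [norm_exp, abs_of_pos ht]
      _ ≤ ‖f t‖ * (σ⁻¹ * Real.exp (-(σ * t))) := by gcongr
      _ = σ⁻¹ * ‖f t * exp (-(σ * t))‖ := by
          rw [norm_mul, norm_exp, neg_re, re_ofReal_mul, ofReal_re, mul_left_comm]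
  · filter_upwards with t r _
    have h : HasDerivAt (fun r : ℂ => -(r * t)) (-t) r := by
      simpa using ((hasDerivAt_id r).mul_const (t : ℂ)).fun_neg
    exact h.cexp.const_mul (f t)

theorem integral_cpow_mul_exp_neg_mul {a r : ℂ} (ha : 0 < a.re) (hr : 0 < r.re) :
    ∫ t : ℝ in Ioi 0, (t : ℂ) ^ (a - 1) * exp (-(r * t)) = r ^ (-a) * Gamma a := by
  have hopen : IsOpen {r : ℂ | 0 < r.re} := isOpen_lt continuous_const continuous_re
  have hlhs := (differentiableOn_integral_mul_exp_neg_mul (f := fun t => (t : ℂ) ^ (a - 1))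
    fun σ hσ => integrableOn_cpow_mul_exp_neg_mul ha (r := σ) hσ).analyticOnNhd hopen
  have hrhs : AnalyticOnNhd ℂ (fun r => r ^ (-a) * Gamma a) {r | 0 < r.re} := fun r hr =>
    (analyticAt_id.cpow analyticAt_const (Or.inl hr)).mul analyticAt_const
  refine hlhs.eqOn_of_preconnected_of_mem_closure (z₀ := 1) hrhs
    (convex_halfSpace_re_gt 0).isPreconnected (by simp) ?_ hr
  refine closure_mono (s := ofReal '' Ioi 1) ?_ ?_
  · rintro _ ⟨x, hx : 1 < x, rfl⟩
    refine ⟨?_, by simpa using hx.ne'⟩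
    have hx0 : 0 < x := one_pos.trans hx
    simp [integral_cpow_mul_exp_neg_mul_Ioi ha hx0,
      inv_cpow _ _ (by rw [arg_ofReal_of_nonneg hx0.le]; exact Real.pi_pos.ne), cpow_neg]
  · refine image_closure_subset_closure_image continuous_ofReal ⟨1, ?_, by simp⟩
    simp [closure_Ioi]

/-! ### The Beta integral on the slit plane -/

theorem mul_cpow_of_arg_add_arg_mem {x y : ℂ} (hx : x ≠ 0) (hy : y ≠ 0)
    (h : arg x + arg y ∈ Ioc (-Real.pi) Real.pi) (s : ℂ) : (x * y) ^ s = x ^ s * y ^ s := by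
  rw [cpow_def_of_ne_zero (mul_ne_zero hx hy), cpow_def_of_ne_zero hx, cpow_def_of_ne_zero hy,
    log_mul hx hy h, add_mul, Complex.exp_add]

theorem mul_ofReal_cpow {x : ℂ} {t : ℝ} (hx : x ≠ 0) (ht : 0 < t) (s : ℂ) :
    (x * t) ^ s = x ^ s * (t : ℂ) ^ s :=
  mul_cpow_of_arg_add_arg_mem hx (ofReal_ne_zero.2 ht.ne')
    (by simpa [arg_ofReal_of_nonneg ht.le] using arg_mem_Ioc x) s

theorem mul_cpow_of_re_pos {x y : ℂ} (hx : 0 < x.re) (hy : 0 < y.re) (s : ℂ) :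
    (x * y) ^ s = x ^ s * y ^ s := by
  have harg {z : ℂ} (hz : 0 < z.re) : |arg z| < Real.pi / 2 :=
    abs_arg_lt_pi_div_two_iff.2 (Or.inl hz)
  obtain ⟨hx₁, hx₂⟩ := abs_lt.1 (harg hx)
  obtain ⟨hy₁, hy₂⟩ := abs_lt.1 (harg hy)
  exact mul_cpow_of_arg_add_arg_mem (ne_zero_of_re_pos hx) (ne_zero_of_re_pos hy)
    ⟨by linarith, by linarith⟩ s

/-- The integrand of the double Gamma integral behind the Beta integral with complex rates: up to
a factor `Γ(p + q)` its `t`-integral is `u ^ (p - 1) * (a + b * u) ^ (-(p + q))`, whereas both its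
`u`-integral and the `t`-integral of the latter are Gamma integrals. -/
noncomputable def betaKernel (a b p q : ℂ) (u t : ℝ) : ℂ :=
  (t : ℂ) ^ (p + q - 1) * exp (-(a * t)) * ((u : ℂ) ^ (p - 1) * exp (-(b * t * u)))

section BetaKernel

variable {a b p q : ℂ}

theorem integral_betaKernel_right (ha : 0 < a.re) (hb : 0 < b.re) (hp : 0 < p.re)
    (hq : 0 < q.re) {u : ℝ} (hu : 0 < u) :
    ∫ t : ℝ in Ioi 0, betaKernel a b p q u t =
      Gamma (p + q) * ((u : ℂ) ^ (p - 1) * (a + b * u) ^ (-(p + q))) := by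
  have hrate : 0 < (a + b * u).re := by simpa using add_pos ha (mul_pos hb hu)
  calc ∫ t : ℝ in Ioi 0, betaKernel a b p q u t
      = ∫ t : ℝ in Ioi 0,
          (u : ℂ) ^ (p - 1) * ((t : ℂ) ^ (p + q - 1) * exp (-((a + b * u) * t))) := by
        congr with t
        rw [betaKernel, show -((a + b * u) * t) = -(a * t) + -(b * t * u) by ring,
          Complex.exp_add]
        ring
    _ = _ := by
        rw [integral_const_mul, integral_cpow_mul_exp_neg_mul (add_pos hp hq) hrate]
        ring

theorem integral_betaKernel_left (hb : 0 < b.re) (hp : 0 < p.re) {t : ℝ} (ht : 0 < t) :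
    ∫ u : ℝ in Ioi 0, betaKernel a b p q u t =
      b ^ (-p) * Gamma p * ((t : ℂ) ^ (q - 1) * exp (-(a * t))) := by
  have hbt : 0 < (b * t).re := by simpa using mul_pos hb ht
  simp only [betaKernel]
  rw [integral_const_mul, integral_cpow_mul_exp_neg_mul hp hbt,
    mul_ofReal_cpow (ne_zero_of_re_pos hb) ht, show q - 1 = p + q - 1 + -p by ring,
    cpow_add _ _ (ofReal_ne_zero.2 ht.ne')]
  ring

theorem integral_norm_betaKernel_left (hb : 0 < b.re) (hp : 0 < p.re) {t : ℝ} (ht : 0 < t) :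
    ∫ u : ℝ in Ioi 0, ‖betaKernel a b p q u t‖ =
      b.re ^ (-p.re) * Real.Gamma p.re * ‖(t : ℂ) ^ (q - 1) * exp (-(a * t))‖ := by
  have hbt : 0 < (b * t).re := by simpa using mul_pos hb ht
  have hexponent : (q - 1).re = (p + q - 1).re + -p.re := by
    simp only [sub_re, add_re, one_re]
    ring
  simp only [betaKernel, norm_mul _ (_ * _)]
  rw [integral_const_mul, integral_norm_cpow_mul_exp_neg_mul hp hbt, re_mul_ofReal,
    Real.mul_rpow hb.le ht.le, norm_mul, norm_mul, norm_cpow_eq_rpow_re_of_pos ht,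
    norm_cpow_eq_rpow_re_of_pos ht, hexponent,
    Real.rpow_add ht]
  ring

theorem integrable_betaKernel (ha : 0 < a.re) (hb : 0 < b.re) (hp : 0 < p.re) (hq : 0 < q.re) :
    Integrable (Function.uncurry (betaKernel a b p q))
      ((volume.restrict (Ioi 0)).prod (volume.restrict (Ioi 0))) := by
  have hmeas : Measurable (Function.uncurry (betaKernel a b p q)) := by
    unfold Function.uncurry betaKernel
    fun_prop
  refine (integrable_prod_iff' hmeas.aestronglyMeasurable).2 ⟨?_, ?_⟩
  · filter_upwards [ae_restrict_mem measurableSet_Ioi] with t (ht : 0 < t)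
    have hbt : 0 < (b * t).re := by simpa using mul_pos hb ht
    exact (integrableOn_cpow_mul_exp_neg_mul hp hbt).const_mul
      ((t : ℂ) ^ (p + q - 1) * exp (-(a * t)))
  · refine ((integrableOn_cpow_mul_exp_neg_mul hq ha).norm.const_mul
      (b.re ^ (-p.re) * Real.Gamma p.re)).congr ?_
    filter_upwards [ae_restrict_mem measurableSet_Ioi] with t ht
    exact (integral_norm_betaKernel_left hb hp ht).symm

theorem integral_cpow_mul_add_mul_cpow (ha : 0 < a.re) (hb : 0 < b.re) (hp : 0 < p.re)
    (hq : 0 < q.re) :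
    ∫ u : ℝ in Ioi 0, (u : ℂ) ^ (p - 1) * (a + b * u) ^ (-(p + q)) =
      Gamma p * Gamma q / Gamma (p + q) * (a ^ (-q) * b ^ (-p)) := by
  have hGamma : Gamma (p + q) ≠ 0 := Gamma_ne_zero_of_re_pos (add_pos hp hq)
  refine mul_left_cancel₀ hGamma ?_
  calc _ = ∫ u : ℝ in Ioi 0, ∫ t : ℝ in Ioi 0, betaKernel a b p q u t := by
        rw [← integral_const_mul]
        exact setIntegral_congr_fun measurableSet_Ioi fun u hu =>
          (integral_betaKernel_right ha hb hp hq hu).symm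
    _ = ∫ t : ℝ in Ioi 0, b ^ (-p) * Gamma p * ((t : ℂ) ^ (q - 1) * exp (-(a * t))) := by
        rw [integral_integral_swap (integrable_betaKernel ha hb hp hq)]
        exact setIntegral_congr_fun measurableSet_Ioi fun t ht => integral_betaKernel_left hb hp ht
    _ = _ := by
        rw [integral_const_mul, integral_cpow_mul_exp_neg_mul hq ha]
        field_simp

end BetaKernel

theorem exists_re_pos_mul_self_eq {c : ℂ} (hc : c ∈ slitPlane) : ∃ b : ℂ, 0 < b.re ∧ b * b = c := by
  refine ⟨exp (log c / 2), ?_, ?_⟩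
  · have harg : arg c < Real.pi := (arg_le_pi c).lt_of_ne (mem_slitPlane_iff_arg.1 hc).1
    rw [exp_re]
    refine mul_pos (Real.exp_pos _) (Real.cos_pos_of_mem_Ioo ⟨?_, ?_⟩) <;>
      rw [div_ofNat_im, log_im] <;> linarith [neg_pi_lt_arg c]
  · rw [← Complex.exp_add, add_halves, exp_log (slitPlane_ne_zero hc)]

theorem mellin_one_add_mul_cpow {c p q : ℂ} (hc : c ∈ slitPlane) (hp : 0 < p.re)
    (hq : 0 < q.re) :
    mellin (fun u => (1 + c * u) ^ (-(p + q))) p =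
      Gamma p * Gamma q / Gamma (p + q) * c ^ (-p) := by
  -- With `b ^ 2 = c`, `1 + c u = b (b⁻¹ + b u)` where `b⁻¹` and `b` have positive real part.
  obtain ⟨b, hb, rfl⟩ := exists_re_pos_mul_self_eq hc
  have hb0 : b ≠ 0 := ne_zero_of_re_pos hb
  have hbinv : 0 < (b⁻¹).re := by
    rw [inv_re]
    exact div_pos hb (normSq_pos.2 hb0)
  have hfactor {u : ℝ} (hu : 0 < u) :
      (1 + b * b * u) ^ (-(p + q)) = b ^ (-(p + q)) * (b⁻¹ + b * u) ^ (-(p + q)) := by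
    have hre : 0 < (b⁻¹ + b * u).re := by simpa using add_pos hbinv (mul_pos hb hu)
    rw [← mul_cpow_of_re_pos hb hre]
    congr 1
    field_simp
  have hinv : (b⁻¹) ^ (-q) = b ^ q := by
    rw [inv_cpow _ _ (slitPlane_arg_ne_pi (Or.inl hb)), cpow_neg, inv_inv]
  calc mellin (fun u => (1 + b * b * u) ^ (-(p + q))) p
      = b ^ (-(p + q)) * ∫ u : ℝ in Ioi 0, (u : ℂ) ^ (p - 1) * (b⁻¹ + b * u) ^ (-(p + q)) := by
        rw [mellin, ← integral_const_mul]
        refine setIntegral_congr_fun measurableSet_Ioi fun u hu => ?_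
        simp only [smul_eq_mul, hfactor hu]
        ring
    _ = _ := by
        rw [integral_cpow_mul_add_mul_cpow hbinv hb hp hq, mul_cpow_of_re_pos hb hb, hinv,
          neg_add, cpow_add _ _ hb0, cpow_neg b q]
        have : b ^ q ≠ 0 := by simp [cpow_eq_zero_iff, hb0]
        field_simp

/-! ### Logarithmic divergence of Laplace transforms -/

/-- The reference function `(1 - e⁻ᵘ) / u`: it is regular at `0`, agrees with `1 / u` up to an
exponentially small error at infinity, and has elementary Laplace and Mellin transforms. -/
noncomputable def regularizedInv (u : ℝ) : ℂ :=
  (1 - exp (-u)) / u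

theorem regularizedInv_eq_integral {u : ℝ} (hu : u ≠ 0) :
    regularizedInv u = ∫ t in Ioc (0 : ℝ) 1, exp (-(t * u)) := by
  have hu' : (-u : ℂ) ≠ 0 := by simpa using hu
  have := integral_exp_mul_complex (a := 0) (b := 1) hu'
  rw [intervalIntegral.integral_of_le zero_le_one] at this
  simp only [neg_mul, mul_comm (u : ℂ)] at this
  rw [this, regularizedInv]
  simp only [ofReal_one, ofReal_zero, one_mul, zero_mul, neg_zero, Complex.exp_zero]
  rw [div_neg, ← neg_div, neg_sub]

theorem integral_cpow_mul_exp_neg_mul_regularizedInv {a : ℂ} {ω : ℝ} (ha : 0 < a.re)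
    (hω : 0 ≤ ω) (hint : IntegrableOn (fun t : ℝ => (ω + t) ^ (-a.re)) (Ioc 0 1)) :
    ∫ u : ℝ in Ioi 0, (u : ℂ) ^ (a - 1) * exp (-(ω * u)) * regularizedInv u =
      Gamma a * ∫ t : ℝ in Ioc 0 1, ((ω + t : ℝ) : ℂ) ^ (-a) := by
  have hrate {t : ℝ} (ht : t ∈ Ioc 0 1) : 0 < ((ω + t : ℝ) : ℂ).re := by
    rw [ofReal_re]
    exact add_pos_of_nonneg_of_pos hω ht.1
  have hprod : Integrable (fun x : ℝ × ℝ => (x.1 : ℂ) ^ (a - 1) * exp (-((ω + x.2 : ℝ) * x.1)))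
      ((volume.restrict (Ioi 0)).prod (volume.restrict (Ioc 0 1))) := by
    have hmeas : Measurable fun x : ℝ × ℝ =>
        (x.1 : ℂ) ^ (a - 1) * exp (-((ω + x.2 : ℝ) * x.1)) := by fun_prop
    refine (integrable_prod_iff' hmeas.aestronglyMeasurable).2 ⟨?_, ?_⟩
    · filter_upwards [ae_restrict_mem measurableSet_Ioc] with t ht
      exact integrableOn_cpow_mul_exp_neg_mul ha (hrate ht)
    · refine (hint.mul_const (Real.Gamma a.re)).congr ?_
      filter_upwards [ae_restrict_mem measurableSet_Ioc] with t ht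
      rw [integral_norm_cpow_mul_exp_neg_mul ha (hrate ht), ofReal_re]
  calc _ = ∫ u : ℝ in Ioi 0, ∫ t : ℝ in Ioc 0 1,
        (u : ℂ) ^ (a - 1) * exp (-((ω + t : ℝ) * u)) := by
        refine setIntegral_congr_fun measurableSet_Ioi fun u (hu : 0 < u) => ?_
        simp only [regularizedInv_eq_integral hu.ne', ← integral_const_mul]
        congr with t
        rw [mul_assoc, ← Complex.exp_add]
        push_cast
        ring_nf
    _ = ∫ t : ℝ in Ioc 0 1, Gamma a * ((ω + t : ℝ) : ℂ) ^ (-a) := by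
        rw [integral_integral_swap hprod]
        refine setIntegral_congr_fun measurableSet_Ioc fun t ht => ?_
        exact (integral_cpow_mul_exp_neg_mul ha (hrate ht)).trans (mul_comm _ _)
    _ = _ := integral_const_mul _ _

theorem integral_exp_neg_mul_regularizedInv {ω : ℝ} (hω : 0 < ω) :
    ∫ u : ℝ in Ioi 0, exp (-(ω * u : ℝ)) * regularizedInv u =
      (Real.log ((1 + ω) / ω) : ℝ) := by
  have hint : IntervalIntegrable (fun t : ℝ => (ω + t)⁻¹) volume 0 1 := by
    refine ContinuousOn.intervalIntegrable fun t ht => ?_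
    rw [uIcc_of_le zero_le_one] at ht
    have : ω + t ≠ 0 := (add_pos_of_pos_of_nonneg hω ht.1).ne'
    exact ContinuousAt.continuousWithinAt (by fun_prop (disch := assumption))
  have h := integral_cpow_mul_exp_neg_mul_regularizedInv (a := 1) (ω := ω) (by simp) hω.le
    (by simpa [Real.rpow_neg_one] using hint.1)
  simp only [sub_self, cpow_zero, one_mul, Gamma_one, cpow_neg_one, ← ofReal_inv] at h
  simp only [ofReal_mul, h]
  rw [integral_complex_ofReal, ← intervalIntegral.integral_of_le zero_le_one,
    intervalIntegral.integral_comp_add_left (fun t => t⁻¹), add_zero, add_comm ω,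
    integral_inv_of_pos hω (by positivity)]

theorem mellin_regularizedInv {s : ℂ} (hs₀ : 0 < s.re) (hs₁ : s.re < 1) :
    mellin regularizedInv s = Gamma s / (1 - s) := by
  have hint : IntervalIntegrable (fun t : ℝ => t ^ (-s.re)) volume 0 1 :=
    intervalIntegral.intervalIntegrable_rpow' (by linarith)
  have h := integral_cpow_mul_exp_neg_mul_regularizedInv (ω := 0) hs₀ le_rfl
    (by simpa using hint.1)
  simp only [ofReal_zero, zero_mul, neg_zero, Complex.exp_zero, mul_one, zero_add] at h
  simp only [mellin, smul_eq_mul, h]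
  have hs : s ≠ 1 := by
    rintro rfl
    simp at hs₁
  rw [← intervalIntegral.integral_of_le zero_le_one, integral_cpow (Or.inl (by simpa using hs₁)),
    neg_add_eq_sub, ofReal_one, one_cpow, ofReal_zero, zero_cpow (sub_ne_zero.2 hs.symm),
    sub_zero, mul_one_div]

/-- The class of continuous functions on `(0, ∞)` that are bounded near `0` and equal `1 / u` up to
`O(u ^ (-(1 + δ)))` at infinity: their Laplace transforms diverge logarithmically at `0`. -/
structure HasInvTail (f : ℝ → ℂ) (δ : ℝ) : Prop where
  continuousOn : ContinuousOn f (Ioi 0)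
  isBigO_zero : f =O[𝓝[>] 0] fun _ => (1 : ℝ)
  isBigO_atTop : (fun u : ℝ => f u - (u : ℂ)⁻¹) =O[atTop] fun u => u ^ (-(1 + δ))

theorem hasInvTail_regularizedInv (δ : ℝ) : HasInvTail regularizedInv δ where
  continuousOn := fun u (hu : 0 < u) => by
    have : (u : ℂ) ≠ 0 := ofReal_ne_zero.2 hu.ne'
    unfold regularizedInv
    exact ContinuousAt.continuousWithinAt (by fun_prop (disch := assumption))
  isBigO_zero := by
    refine IsBigO.of_bound 1 ?_
    filter_upwards [self_mem_nhdsWithin] with u (hu : 0 < u)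
    have hexp : 0 ≤ 1 - Real.exp (-u) := by simpa using hu.le
    have hreal : regularizedInv u = ((1 - Real.exp (-u)) / u : ℝ) := by
      push_cast [regularizedInv]
      rfl
    rw [hreal, norm_real, Real.norm_of_nonneg (by positivity), norm_one, mul_one,
      div_le_one hu]
    linarith [Real.add_one_le_exp (-u)]
  isBigO_atTop := by
    refine IsBigO.trans (IsBigO.of_bound 1 ?_)
      (isLittleO_exp_neg_mul_rpow_atTop one_pos (-(1 + δ))).isBigO
    filter_upwards [eventually_ge_atTop 1] with u hu
    have hdiff : regularizedInv u - (u : ℂ)⁻¹ = -(exp (-u) / u) := by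
      rw [regularizedInv]
      ring
    rw [hdiff, norm_neg, norm_div, norm_exp, norm_real, Real.norm_of_nonneg (by positivity),
      Real.norm_of_nonneg (Real.exp_nonneg _), one_mul]
    simpa using div_le_self (Real.exp_nonneg (-u)) hu

theorem tendsto_inv_mul_Gamma_one_sub_sub_one :
    Tendsto (fun ε : ℝ => (ε : ℂ)⁻¹ * (Gamma (1 - ε) - 1)) (𝓝[>] 0)
      (𝓝 Real.eulerMascheroniConstant) := by
  have hsub : HasDerivAt (fun ε : ℝ => (1 - ε : ℂ)) (-1) 0 :=
    (HasDerivAt.ofReal_comp (hasDerivAt_id (0 : ℝ))).const_sub 1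
  have hderiv : HasDerivAt (fun ε : ℝ => Gamma (1 - ε)) Real.eulerMascheroniConstant 0 := by
    refine (HasDerivAt.comp (0 : ℝ) ?_ hsub).congr_deriv (neg_mul_neg _ 1 |>.trans (mul_one _))
    simpa using hasDerivAt_Gamma_one
  simpa using hderiv.tendsto_slope_zero_right

namespace HasInvTail

variable {f g : ℝ → ℂ} {δ : ℝ}

theorem isBigO_rpow_neg_one (hf : HasInvTail f δ) (hδ : 0 ≤ δ) :
    f =O[atTop] fun u => u ^ (-1 : ℝ) := by
  have hinv : (fun u : ℝ => (u : ℂ)⁻¹) =O[atTop] fun u => u ^ (-1 : ℝ) :=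
    IsBigO.of_norm_left <| by
      simpa [Real.rpow_neg_one] using (isBigO_refl (fun u : ℝ => u⁻¹) atTop).norm_left
  have htail : (fun u : ℝ => u ^ (-(1 + δ))) =O[atTop] fun u => u ^ (-1 : ℝ) := by
    refine IsBigO.of_bound 1 ?_
    filter_upwards [eventually_ge_atTop 1] with u hu
    rw [one_mul, Real.norm_of_nonneg (by positivity), Real.norm_of_nonneg (by positivity)]
    exact Real.rpow_le_rpow_of_exponent_le hu (by linarith)
  simpa using (hf.isBigO_atTop.trans htail).add hinv

theorem sub_isBigO_zero (hf : HasInvTail f δ) (hg : HasInvTail g δ) :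
    (fun u => f u - g u) =O[𝓝[>] 0] fun u => u ^ (-0 : ℝ) := by
  simpa using hf.isBigO_zero.sub hg.isBigO_zero

theorem sub_isBigO_atTop (hf : HasInvTail f δ) (hg : HasInvTail g δ) :
    (fun u => f u - g u) =O[atTop] fun u => u ^ (-(1 + δ)) := by
  simpa using hf.isBigO_atTop.sub hg.isBigO_atTop

theorem sub_locallyIntegrableOn (hf : HasInvTail f δ) (hg : HasInvTail g δ) :
    LocallyIntegrableOn (fun u => f u - g u) (Ioi 0) :=
  (hf.continuousOn.sub hg.continuousOn).locallyIntegrableOn measurableSet_Ioi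

theorem mellinConvergent (hf : HasInvTail f δ) (hδ : 0 ≤ δ) {s : ℂ} (hs₀ : 0 < s.re)
    (hs₁ : s.re < 1) : MellinConvergent f s :=
  mellinConvergent_of_isBigO_rpow (hf.continuousOn.locallyIntegrableOn measurableSet_Ioi)
    (hf.isBigO_rpow_neg_one hδ) hs₁ (by simpa using hf.isBigO_zero) hs₀

theorem integrableOn_sub (hf : HasInvTail f δ) (hg : HasInvTail g δ) (hδ : 0 < δ) :
    IntegrableOn (fun u => f u - g u) (Ioi 0) := by
  simpa [MellinConvergent] using mellinConvergent_of_isBigO_rpow (s := 1)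
    (hf.sub_locallyIntegrableOn hg) (hf.sub_isBigO_atTop hg) (by simpa using hδ)
    (hf.sub_isBigO_zero hg) (by simp)

theorem integrableOn_exp_neg_mul (hf : HasInvTail f δ) (hδ : 0 ≤ δ) {ω : ℝ} (hω : 0 < ω) :
    IntegrableOn (fun u : ℝ => exp (-(ω * u : ℝ)) * f u) (Ioi 0) := by
  have hcont : ContinuousOn (fun u : ℝ => exp (-(ω * u : ℝ)) * f u) (Ioi 0) :=
    ContinuousOn.mul (by fun_prop) hf.continuousOn
  have hexp (l : Filter ℝ) :
      (fun u : ℝ => exp (-(ω * u : ℝ))) =O[l] fun u => Real.exp (-ω * u) :=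
    IsBigO.of_bound 1 (.of_forall fun u => by simp [norm_exp])
  have htop : f =O[atTop] fun _ => (1 : ℝ) :=
    (hf.isBigO_rpow_neg_one hδ).trans ((tendsto_rpow_neg_atTop one_pos).isBigO_one ℝ)
  have hexp_zero : (fun u => Real.exp (-ω * u)) =O[𝓝[>] 0] fun _ => (1 : ℝ) :=
    ((by fun_prop : Continuous fun u => Real.exp (-ω * u)).tendsto 0).isBigO_one ℝ |>.mono
      nhdsWithin_le_nhds
  simpa [MellinConvergent] using mellinConvergent_of_isBigO_rpow_exp (s := 1) (b := 0) hω
    (hcont.locallyIntegrableOn measurableSet_Ioi) (by simpa using (hexp _).mul htop)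
    (by simpa using ((hexp _).trans hexp_zero).mul hf.isBigO_zero) (by simp)

theorem tendsto_mellin_sub (hf : HasInvTail f δ) (hg : HasInvTail g δ) (hδ : 0 < δ) :
    Tendsto (fun ε : ℝ => mellin f (1 - ε) - mellin g (1 - ε)) (𝓝[>] 0)
      (𝓝 (∫ u in Ioi 0, (f u - g u))) := by
  have hdiff : DifferentiableAt ℂ (mellin fun u => f u - g u) 1 :=
    mellin_differentiableAt_of_isBigO_rpow (hf.sub_locallyIntegrableOn hg)
      (hf.sub_isBigO_atTop hg) (by simpa using hδ) (hf.sub_isBigO_zero hg) (by simp)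
  have hlim : Tendsto (fun ε : ℝ => (1 - ε : ℂ)) (𝓝[>] 0) (𝓝 1) := by
    have : Continuous fun ε : ℝ => (1 - ε : ℂ) := by fun_prop
    simpa using (this.tendsto 0).mono_left nhdsWithin_le_nhds
  have hval : mellin (fun u => f u - g u) 1 = ∫ u in Ioi 0, (f u - g u) := by simp [mellin]
  rw [← hval]
  refine (hdiff.continuousAt.tendsto.comp hlim).congr' ?_
  filter_upwards [Ioo_mem_nhdsGT (zero_lt_one' ℝ)] with ε hε
  have hs₀ : 0 < (1 - ε : ℂ).re := by simpa using hε.2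
  have hs₁ : (1 - ε : ℂ).re < 1 := by simpa using hε.1
  exact (hasMellin_sub (hf.mellinConvergent hδ.le hs₀ hs₁) (hg.mellinConvergent hδ.le hs₀ hs₁)).2

theorem tendsto_laplace_sub (hf : HasInvTail f δ) (hg : HasInvTail g δ) (hδ : 0 < δ) :
    Tendsto (fun ω : ℝ => (∫ u : ℝ in Ioi 0, exp (-(ω * u : ℝ)) * f u) -
        ∫ u : ℝ in Ioi 0, exp (-(ω * u : ℝ)) * g u) (𝓝[>] 0)
      (𝓝 (∫ u in Ioi 0, (f u - g u))) := by
  have hint := hf.integrableOn_sub hg hδ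
  have hdom : Tendsto (fun ω : ℝ => ∫ u : ℝ in Ioi 0, exp (-(ω * u : ℝ)) * (f u - g u))
      (𝓝[>] 0) (𝓝 (∫ u in Ioi 0, (f u - g u))) := by
    refine tendsto_integral_filter_of_dominated_convergence (fun u => ‖f u - g u‖)
      (.of_forall fun ω => AEStronglyMeasurable.mul (by fun_prop) hint.aestronglyMeasurable)
      ?_ hint.norm (.of_forall fun u => ?_)
    · filter_upwards [self_mem_nhdsWithin] with ω (hω : 0 < ω)
      filter_upwards [ae_restrict_mem measurableSet_Ioi] with u (hu : 0 < u)
      rw [norm_mul, norm_exp]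
      refine mul_le_of_le_one_left (norm_nonneg _) (Real.exp_le_one_iff.2 ?_)
      simpa using (mul_pos hω hu).le
    · have : Continuous fun ω : ℝ => exp (-(ω * u : ℝ)) * (f u - g u) := by fun_prop
      simpa using (this.tendsto 0).mono_left nhdsWithin_le_nhds
  refine hdom.congr' ?_
  filter_upwards [self_mem_nhdsWithin] with ω hω
  rw [← integral_sub (hf.integrableOn_exp_neg_mul hδ.le hω) (hg.integrableOn_exp_neg_mul hδ.le hω)]
  simp only [mul_sub]

theorem tendsto_laplace_sub_log (hf : HasInvTail f δ) (hδ : 0 < δ) {L : ℂ}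
    (hL : Tendsto (fun ε : ℝ => mellin f (1 - ε) - (ε : ℂ)⁻¹) (𝓝[>] 0) (𝓝 L)) :
    Tendsto (fun ω : ℝ => (∫ u : ℝ in Ioi 0, exp (-(ω * u : ℝ)) * f u) - Real.log (1 / ω))
      (𝓝[>] 0) (𝓝 (L - Real.eulerMascheroniConstant)) := by
  have hsub : Tendsto (fun ε : ℝ => mellin f (1 - ε) - mellin regularizedInv (1 - ε)) (𝓝[>] 0)
      (𝓝 (L - Real.eulerMascheroniConstant)) := by
    refine (hL.sub tendsto_inv_mul_Gamma_one_sub_sub_one).congr' ?_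
    filter_upwards [Ioo_mem_nhdsGT (zero_lt_one' ℝ)] with ε hε
    rw [mellin_regularizedInv (by simpa using hε.2) (by simpa using hε.1)]
    ring
  have href := hasInvTail_regularizedInv δ
  have hlog : Tendsto (fun ω : ℝ => (Real.log (1 + ω) : ℂ)) (𝓝[>] 0) (𝓝 0) := by
    have : ContinuousAt (fun ω : ℝ => (Real.log (1 + ω) : ℂ)) 0 := by
      fun_prop (disch := simp)
    simpa using this.tendsto.mono_left nhdsWithin_le_nhds
  rw [← tendsto_nhds_unique (hf.tendsto_mellin_sub href hδ) hsub,
    ← add_zero (∫ u in Ioi 0, (f u - regularizedInv u))]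
  refine ((hf.tendsto_laplace_sub href hδ).add hlog).congr' ?_
  filter_upwards [self_mem_nhdsWithin] with ω (hω : 0 < ω)
  rw [integral_exp_neg_mul_regularizedInv hω, Real.log_div (by positivity) hω.ne',
    Real.log_div one_ne_zero hω.ne', Real.log_one]
  push_cast
  ring

end HasInvTail

/-! ### The boundary generalized Cauchy function -/

/-- The boundary generalized Cauchy covariance `t ↦ (1 + t ^ α) ^ (-1 / α)` with `t ^ α` rotated by
a factor `c`, normalized so as to be asymptotic to `1 / u` at infinity. -/
noncomputable def boundaryCauchy (α : ℝ) (c : ℂ) (u : ℝ) : ℂ :=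
  c ^ (α⁻¹ : ℂ) * (1 + c * (u ^ α : ℝ)) ^ (-(α⁻¹ : ℂ))

section BoundaryCauchy

variable {α : ℝ} {c : ℂ}

theorem one_add_mul_ofReal_mem_slitPlane (hc : c ∈ slitPlane) {t : ℝ} (ht : 0 ≤ t) :
    1 + c * t ∈ slitPlane := by
  rcases ht.eq_or_lt with rfl | ht
  · simp
  · refine (mem_slitPlane_iff.1 hc).imp (fun hre => ?_) fun him => ?_
    · simpa using add_pos one_pos (mul_pos hre ht)
    · simpa using ⟨him, ht.ne'⟩

theorem continuousOn_boundaryCauchy (hα : 0 < α) (hc : c ∈ slitPlane) :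
    ContinuousOn (boundaryCauchy α c) (Ici 0) := by
  have hrpow : ContinuousOn (fun u : ℝ => 1 + c * (u ^ α : ℝ)) (Ici 0) := by
    have := Real.continuous_rpow_const hα.le
    fun_prop
  refine continuousOn_const.mul (hrpow.cpow_const fun u hu => ?_)
  exact one_add_mul_ofReal_mem_slitPlane hc (Real.rpow_nonneg hu α)

theorem boundaryCauchy_eq_inv_mul (hα : α ≠ 0) (hc : c ∈ slitPlane) {u : ℝ} (hu : 0 < u) :
    boundaryCauchy α c u =
      (u : ℂ)⁻¹ * (c ^ (α⁻¹ : ℂ) * ((u ^ (-α) : ℝ) + c) ^ (-(α⁻¹ : ℂ))) := by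
  have hpos : 0 < u ^ α := Real.rpow_pos_of_pos hu α
  have hfactor : 1 + c * (u ^ α : ℝ) = ((u ^ (-α) : ℝ) + c) * (u ^ α : ℝ) := by
    rw [add_mul, ← ofReal_mul, ← Real.rpow_add hu, neg_add_cancel, Real.rpow_zero, ofReal_one]
  have hne : ((u ^ (-α) : ℝ) + c) ≠ 0 := left_ne_zero_of_mul
    (hfactor ▸ slitPlane_ne_zero (one_add_mul_ofReal_mem_slitPlane hc hpos.le))
  have hinv : ((u ^ α : ℝ) : ℂ) ^ (-(α⁻¹ : ℂ)) = (u : ℂ)⁻¹ := by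
    rw [← ofReal_inv, ← ofReal_neg, ← ofReal_cpow hpos.le, ← Real.rpow_mul hu.le, mul_neg,
      mul_inv_cancel₀ hα, Real.rpow_neg_one, ofReal_inv]
  rw [boundaryCauchy, hfactor, mul_ofReal_cpow hne hpos, hinv]
  ring

theorem hasInvTail_boundaryCauchy (hα : 0 < α) (hc : c ∈ slitPlane) :
    HasInvTail (boundaryCauchy α c) α where
  continuousOn := (continuousOn_boundaryCauchy hα hc).mono Ioi_subset_Ici_self
  isBigO_zero :=
    (((continuousOn_boundaryCauchy hα hc) 0 self_mem_Ici).mono Ioi_subset_Ici_self).isBigO_one ℝ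
  isBigO_atTop := by
    have hderiv : DifferentiableAt ℂ (fun z => c ^ (α⁻¹ : ℂ) * (z + c) ^ (-(α⁻¹ : ℂ))) 0 :=
      ((differentiableAt_id.add_const c).cpow_const (by simpa using hc)).const_mul _
    have hzero : Tendsto (fun u : ℝ => ((u ^ (-α) : ℝ) : ℂ)) atTop (𝓝 0) := by
      simpa [Function.comp_def] using (continuous_ofReal.tendsto 0).comp (tendsto_rpow_neg_atTop hα)
    have hvalue : c ^ (α⁻¹ : ℂ) * (0 + c) ^ (-(α⁻¹ : ℂ)) = 1 := by
      rw [zero_add, ← cpow_add _ _ (slitPlane_ne_zero hc), add_neg_cancel, cpow_zero]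
    have hbig := (isBigO_refl (fun u : ℝ => (u : ℂ)⁻¹) atTop).mul
      (hderiv.hasDerivAt.isBigO_sub.comp_tendsto hzero)
    refine (hbig.congr' ?_ .rfl).trans (IsBigO.of_bound 1 ?_)
    · filter_upwards [eventually_gt_atTop 0] with u hu
      simp only [Function.comp_apply, hvalue]
      rw [boundaryCauchy_eq_inv_mul hα.ne' hc hu]
      ring
    · filter_upwards [eventually_gt_atTop 0] with u hu
      simp only [Function.comp_apply, sub_zero]
      rw [neg_add, Real.rpow_add hu, Real.rpow_neg_one, one_mul, ← ofReal_inv, ← ofReal_mul,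
        norm_real]

theorem mellin_boundaryCauchy_eq_mellin_one_add_mul (hα : 0 < α) (s : ℂ) :
    mellin (boundaryCauchy α c) s =
      c ^ (α⁻¹ : ℂ) * ((α : ℂ)⁻¹ * mellin (fun u => (1 + c * u) ^ (-(α⁻¹ : ℂ))) (s / α)) := by
  have hcomp := mellin_comp_rpow (fun u => (1 + c * u) ^ (-(α⁻¹ : ℂ))) s α
  have hsmul := mellin_const_smul (fun u : ℝ => (1 + c * (u ^ α : ℝ)) ^ (-(α⁻¹ : ℂ))) s
    (c ^ (α⁻¹ : ℂ))
  rw [hcomp, abs_of_pos hα, real_smul, ofReal_inv] at hsmul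
  exact hsmul

theorem mellin_boundaryCauchy (hα : 0 < α) (hc : c ∈ slitPlane) {ε : ℂ} (hε₀ : 0 < ε.re)
    (hε₁ : ε.re < 1) :
    mellin (boundaryCauchy α c) (1 - ε) = ε⁻¹ * (c ^ ((α : ℂ)⁻¹ * ε) *
      (Gamma ((α : ℂ)⁻¹ - (α : ℂ)⁻¹ * ε) * Gamma (1 + (α : ℂ)⁻¹ * ε)) / Gamma (α : ℂ)⁻¹) := by
  have hα0 : (α : ℂ)⁻¹ ≠ 0 := inv_ne_zero (ofReal_ne_zero.2 hα.ne')
  have hε0 : ε ≠ 0 := ne_zero_of_re_pos hε₀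
  have hc0 : c ≠ 0 := slitPlane_ne_zero hc
  have hp : 0 < ((α : ℂ)⁻¹ - (α : ℂ)⁻¹ * ε).re := by
    have : 0 < α⁻¹ * (1 - ε.re) := mul_pos (inv_pos.2 hα) (sub_pos.2 hε₁)
    rwa [← mul_one_sub, ← ofReal_inv, re_ofReal_mul, sub_re, one_re]
  have hq : 0 < ((α : ℂ)⁻¹ * ε).re := by
    simpa [← ofReal_inv] using mul_pos (inv_pos.2 hα) hε₀
  have hbeta := mellin_one_add_mul_cpow hc hp hq
  have harg : (1 - ε) / α = (α : ℂ)⁻¹ - (α : ℂ)⁻¹ * ε := by ring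
  rw [sub_add_cancel] at hbeta
  rw [mellin_boundaryCauchy_eq_mellin_one_add_mul hα, harg, hbeta, add_comm 1,
    Gamma_add_one _ (mul_ne_zero hα0 hε0), neg_sub, cpow_sub _ _ hc0]
  have hcpow : c ^ (α⁻¹ : ℂ) ≠ 0 := by simp [cpow_eq_zero_iff, hc0]
  generalize c ^ (α⁻¹ : ℂ) = w at hcpow ⊢
  field_simp

theorem hasDerivAt_Gamma_mul_digamma {s : ℂ} (hs : ∀ m : ℕ, s ≠ -m) :
    HasDerivAt Gamma (Gamma s * digamma s) s := by
  refine (differentiableAt_Gamma s hs).hasDerivAt.congr_deriv ?_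
  rw [digamma_def, logDeriv_apply, mul_div_cancel₀ _ (Gamma_ne_zero hs)]

theorem hasDerivAt_cpow_mul_Gamma_mul_Gamma_div {β : ℂ} (hc : c ≠ 0) (hβ : ∀ m : ℕ, β ≠ -m) :
    HasDerivAt (fun z => c ^ (β * z) * (Gamma (β - β * z) * Gamma (1 + β * z)) / Gamma β)
      (β * (log c - digamma β - Real.eulerMascheroniConstant)) 0 := by
  have hlin : HasDerivAt (fun z => β * z) β 0 := by
    simpa using (hasDerivAt_id (0 : ℂ)).const_mul β
  have hpow : HasDerivAt (fun z => c ^ (β * z)) (log c * β) 0 := by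
    simpa using hlin.const_cpow (c := c) (Or.inl hc)
  have hleft : HasDerivAt (fun z => Gamma (β - β * z)) (Gamma β * digamma β * -β) 0 :=
    HasDerivAt.comp 0 (by simpa using hasDerivAt_Gamma_mul_digamma hβ) (hlin.const_sub β)
  have hright : HasDerivAt (fun z => Gamma (1 + β * z)) (-Real.eulerMascheroniConstant * β) 0 :=
    HasDerivAt.comp 0 (by simpa using hasDerivAt_Gamma_one) (hlin.const_add 1)
  refine ((hpow.mul (hleft.fun_mul hright)).div_const (Gamma β)).congr_deriv ?_
  have := Gamma_ne_zero hβ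
  simp only [mul_zero, sub_zero, add_zero, cpow_zero, Gamma_one]
  field_simp
  ring

theorem tendsto_mellin_boundaryCauchy_sub (hα : 0 < α) (hc : c ∈ slitPlane) :
    Tendsto (fun ε : ℝ => mellin (boundaryCauchy α c) (1 - ε) - (ε : ℂ)⁻¹) (𝓝[>] 0)
      (𝓝 ((α : ℂ)⁻¹ * (log c - digamma (α : ℂ)⁻¹ - Real.eulerMascheroniConstant))) := by
  have hβ : ∀ m : ℕ, (α⁻¹ : ℂ) ≠ -m := by
    exact_mod_cast fun m : ℕ => ((neg_nonpos.2 m.cast_nonneg).trans_lt (inv_pos.2 hα)).ne'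
  have hslope := (HasDerivAt.comp_ofReal (z := 0) (by
    simpa using hasDerivAt_cpow_mul_Gamma_mul_Gamma_div
      (slitPlane_ne_zero hc) hβ)).tendsto_slope_zero_right
  refine hslope.congr' ?_
  filter_upwards [Ioo_mem_nhdsGT (zero_lt_one' ℝ)] with ε hε
  rw [mellin_boundaryCauchy hα hc (by simpa using hε.1) (by simpa using hε.2)]
  simp [div_self (Gamma_ne_zero hβ), mul_sub]

theorem tendsto_laplace_boundaryCauchy_sub_log (hα : 0 < α) (hc : c ∈ slitPlane) :
    Tendsto (fun ω : ℝ =>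
        (∫ u : ℝ in Ioi 0, exp (-(ω * u : ℝ)) * boundaryCauchy α c u) - Real.log (1 / ω))
      (𝓝[>] 0) (𝓝 ((α : ℂ)⁻¹ * (log c - digamma (α : ℂ)⁻¹ - Real.eulerMascheroniConstant) -
        Real.eulerMascheroniConstant)) :=
  (hasInvTail_boundaryCauchy hα hc).tendsto_laplace_sub_log hα
    (tendsto_mellin_boundaryCauchy_sub hα hc)

end BoundaryCauchy

theorem digamma_ofReal {x : ℝ} (hx : ∀ m : ℕ, x ≠ -m) :
    digamma x = (deriv Real.Gamma x / Real.Gamma x : ℝ) := by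
  have hderiv := (differentiableAt_Gamma x (by exact_mod_cast hx)).hasDerivAt.comp_ofReal
  simp only [Gamma_ofReal] at hderiv
  rw [digamma_def, logDeriv_apply, ← hderiv.deriv, (Real.differentiableAt_Gamma hx).hasDerivAt
    |>.ofReal_comp.deriv, Gamma_ofReal, ofReal_div]

theorem log_exp_ofReal_mul_I {θ : ℝ} (hθ : θ ∈ Ioc (-Real.pi) Real.pi) :
    log (exp (θ * I)) = θ * I :=
  log_exp (by simpa using hθ.1) (by simpa using hθ.2)

theorem exp_ofReal_mul_I_mem_slitPlane {θ : ℝ} (hθ : θ ∈ Ioo (-Real.pi) Real.pi) :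
    exp (θ * I) ∈ slitPlane := by
  refine mem_slitPlane_iff_arg.2 ⟨?_, exp_ne_zero _⟩
  rw [arg_exp_mul_I, toIocMod_eq_self _ |>.2]
  · exact hθ.2.ne
  · exact ⟨hθ.1, by linarith [hθ.2]⟩

theorem pi_mul_div_two_mem_Ioo {α : ℝ} (hα : α ∈ Ioo (0 : ℝ) 2) :
    Real.pi * α / 2 ∈ Ioo (-Real.pi) Real.pi :=
  ⟨by nlinarith [Real.pi_pos, hα.1], by nlinarith [Real.pi_pos, hα.2]⟩

theorem gfgccSpectralDensity_eq_re_laplace {α : ℝ} (hα : α ∈ Ioo (0 : ℝ) 2) (ω : ℝ) :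
    gfgccSpectralDensity α α⁻¹ ω = 1 / Real.pi *
      (∫ u : ℝ in Ioi 0, exp (-(ω * u : ℝ)) *
        boundaryCauchy α (exp ((Real.pi * α / 2 : ℝ) * I)) u).re := by
  have hα0 : (α : ℂ) ≠ 0 := ofReal_ne_zero.2 hα.1.ne'
  have hpow : exp ((Real.pi * α / 2 : ℝ) * I) ^ (α⁻¹ : ℂ) = I := by
    rw [cpow_def_of_ne_zero (exp_ne_zero _),
      log_exp_ofReal_mul_I (Ioo_subset_Ioc_self (pi_mul_div_two_mem_Ioo hα))]
    have harg : ((Real.pi * α / 2 : ℝ) : ℂ) * I * (α : ℂ)⁻¹ = Real.pi / 2 * I := by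
      push_cast
      field_simp
    rw [harg, exp_pi_div_two_mul_I]
  have hfun : ∫ u : ℝ in Ioi 0, exp (-(ω * u : ℝ)) *
        boundaryCauchy α (exp ((Real.pi * α / 2 : ℝ) * I)) u =
      I * ∫ u : ℝ in Ioi 0, exp (-(ω * u : ℝ)) *
        (1 + exp ((Real.pi : ℂ) * α / 2 * I) * (u : ℂ) ^ (α : ℂ)) ^ (-((α⁻¹ : ℝ) : ℂ)) := by
    rw [← integral_const_mul]
    refine setIntegral_congr_fun measurableSet_Ioi fun u (hu : 0 < u) => ?_
    simp only [boundaryCauchy, hpow, ofReal_cpow hu.le]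
    push_cast
    ring
  rw [hfun, gfgccSpectralDensity, I_mul_re]
  ring

end

/-- Logarithmic divergence of the spectral density of the one-dimensional GFGCC at the
origin in the boundary long-range-dependence case `αβ = 1`:
`lim_{ω→0⁺} [S_{α,β}(ω) − (1/π) ln(1/ω)] = −(1/π)(β(ψ(β) + γ) + γ)`, where
`ψ = Γ′/Γ` is the digamma function and `γ` the Euler–Mascheroni constant. -/
theorem gfgcc_spectral_low_frequency_boundary (α β : ℝ)
    (hα : α ∈ Set.Ioo (0 : ℝ) 2) (hβ : 0 < β) (hαβ : α * β = 1) :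
    Tendsto (fun ω : ℝ => gfgccSpectralDensity α β ω - 1 / Real.pi * Real.log (1 / ω))
      (nhdsWithin 0 (Set.Ioi 0))
      (nhds (-(1 / Real.pi) *
        (β * (deriv Real.Gamma β / Real.Gamma β + Real.eulerMascheroniConstant)
          + Real.eulerMascheroniConstant))) := by
  obtain rfl : β = α⁻¹ := eq_inv_of_mul_eq_one_right hαβ
  have hθ := pi_mul_div_two_mem_Ioo hα
  have hlim := tendsto_laplace_boundaryCauchy_sub_log hα.1 (exp_ofReal_mul_I_mem_slitPlane hθ)
  rw [log_exp_ofReal_mul_I (Set.Ioo_subset_Ioc_self hθ), ← Complex.ofReal_inv,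
    digamma_ofReal fun m => ((neg_nonpos.2 m.cast_nonneg).trans_lt hβ).ne'] at hlim
  have hre := ((Complex.continuous_re.tendsto _).comp hlim).const_mul (1 / Real.pi)
  refine (hre.congr fun ω => ?_).trans_eq (congrArg nhds ?_)
  · simp [gfgccSpectralDensity_eq_re_laplace hα, mul_add]
  · simp only [Complex.sub_re, Complex.re_ofReal_mul, Complex.ofReal_re, Complex.I_re]
    ring
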